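/- arXiv:1812.05577 — 2 statements merged into one kernel-verified Lean document; each statement's English description precedes it below -/
import Mathlib

section
/- Let 𝓛 and 𝓛' be ergodic reversible generator matrices on the same finite state space Ω (with |Ω| ≥ 2), with stationary distributions π and π' respectively. Let ω assign a positive weight to each transition of 𝓛. For each transition (α,β) of 𝓛', let Γ_{α,β} be a nonempty finite set of 𝓛-paths from α to β together with a flow g_{α,β} : Γ_{α,β} → [0,1] satisfying Σ_{γ∈Γ_{α,β}} g_{α,β}(γ) = 1. Set b = max_{α∈Ω} π(α)/π'(α), and for each transition (σ,η) of 𝓛 define the congestion ρ_{σ,η} = (1/(π(σ)·𝓛[σ→η]·ω(σ,η))) · Σ over all transitions (α,β) of 𝓛' and all paths γ ∈ Γ_{α,β} that use the transition (σ,η) of g_{α,β}(γ)·π'(α)·𝓛'[α→β]·|γ|_ω, where each use of (σ,η) in γ is counted with multiplicity; let ρ_max be the maximum of ρ_{σ,η} over all transitions (σ,η) of 𝓛. Then τ(𝓛) ≤ b²·ρ_max·τ(𝓛'). -/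
/-!
A Poincaré inequality `Var_π f ≤ C 𝓔(f, f)` says exactly that `C` is at least the relaxation time.
For the optimal constant `τ'` of the second chain,

  `Var_π f ≤ b² Var_π' f ≤ b² τ' 𝓔'(f, f) ≤ b² τ' ρ_max 𝓔(f, f)`,

so `b² ρ_max τ'` is a Poincaré constant of the first chain. The first step uses `π ≤ b π'` twice.
For the last one, an increment `f α - f β` telescopes along each path `γ` from `α` to `β`, and
weighted Cauchy–Schwarz gives

  `(f α - f β)² ≤ |γ|_ω ∑ (f σ - f η)² / ω(σ, η)`,

the sum being over the steps of `γ`. Averaging over the flow, summing over the transitions of `𝓛'`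
and exchanging the sums, the coefficient of `(f σ - f η)² / ω(σ, η)` becomes
`π(σ) 𝓛[σ→η] ω(σ, η) ρ_{σ,η}`.
-/

open Finset
open scoped Classical

section Markov

variable {Ω : Type*} [Fintype Ω]

/-- A generator matrix: nonnegative off-diagonal entries, zero row sums. -/
def IsGenerator (L : Ω → Ω → ℝ) : Prop :=
  (∀ x y : Ω, x ≠ y → 0 ≤ L x y) ∧ (∀ x : Ω, ∑ y : Ω, L x y = 0)

/-- A transition of a generator matrix. -/
def IsTransition (L : Ω → Ω → ℝ) (x y : Ω) : Prop := x ≠ y ∧ 0 < L x y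

/-- Ergodicity: the directed graph of transitions is strongly connected. -/
def IsErgodicGen (L : Ω → Ω → ℝ) : Prop :=
  ∀ x y : Ω, Relation.ReflTransGen (IsTransition L) x y

/-- Reversibility with respect to a distribution π. -/
def IsReversible (L : Ω → Ω → ℝ) (π : Ω → ℝ) : Prop :=
  ∀ x y : Ω, π x * L x y = π y * L y x

/-- The variance form. -/
noncomputable def VarForm (π : Ω → ℝ) (f : Ω → ℝ) : ℝ :=
  (1 / 2) * ∑ a : Ω, ∑ b : Ω, π a * π b * (f a - f b) ^ 2

/-- The Dirichlet form. -/
noncomputable def DirForm (π : Ω → ℝ) (L : Ω → Ω → ℝ) (f : Ω → ℝ) : ℝ :=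
  (1 / 2) * ∑ a : Ω, ∑ b : Ω, π a * L a b * (f a - f b) ^ 2

/-- The spectral gap: infimum (= minimum) of the Rayleigh quotient over nonconstant functions. -/
noncomputable def specGap (π : Ω → ℝ) (L : Ω → Ω → ℝ) : ℝ :=
  sInf {r : ℝ | ∃ f : Ω → ℝ, (∃ a b : Ω, f a ≠ f b) ∧ r = DirForm π L f / VarForm π f}

/-- The relaxation time, with the convention that it equals 1 on a one-point space. -/
noncomputable def relaxTime (π : Ω → ℝ) (L : Ω → Ω → ℝ) : ℝ :=
  if ∃ a b : Ω, a ≠ b then 1 / specGap π L else 1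

/-- The uniform distribution on a finite type. -/
noncomputable def unif (Ω : Type*) [Fintype Ω] : Ω → ℝ := fun _ => 1 / (Fintype.card Ω : ℝ)

end Markov

section Paths

variable {Ω : Type*} [Fintype Ω] [DecidableEq Ω]

/-- `γ` is an `L`-path from `a` to `b`: a sequence of at least two states, starting at `a`,
ending at `b`, each consecutive pair being a transition of `L`. -/
def IsLPath (L : Ω → Ω → ℝ) (a b : Ω) (γ : List Ω) : Prop :=
  2 ≤ γ.length ∧ γ.head? = some a ∧ γ.getLast? = some b ∧ γ.Chain' (IsTransition L)

/-- The `ω`-weight of a path: the sum of the weights of its steps. -/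
noncomputable def pathWeight (ω : Ω → Ω → ℝ) (γ : List Ω) : ℝ :=
  ((γ.zip γ.tail).map fun p => ω p.1 p.2).sum

/-- The length `|γ|` of a path (number of steps). -/
def pathLen (γ : List Ω) : ℕ := γ.length - 1

/-- The number of times the path `γ` uses the transition `(σ,η)`, with multiplicity. -/
def pathUses (γ : List Ω) (σ η : Ω) : ℕ := (γ.zip γ.tail).count (σ, η)

end Paths

/-- The congestion `ρ_{σ,η}` of a transition `(σ,η)` of `L` for a family of flows
`(Γ_{α,β}, g_{α,β})` along transitions of `L'`. -/
noncomputable def congestion {Ω : Type*} [Fintype Ω] [DecidableEq Ω]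
    (L L' : Ω → Ω → ℝ) (π π' : Ω → ℝ) (ω : Ω → Ω → ℝ)
    (Γ : Ω → Ω → Finset (List Ω)) (g : Ω → Ω → List Ω → ℝ) (σ η : Ω) : ℝ :=
  (1 / (π σ * L σ η * ω σ η)) *
    ∑ α : Ω, ∑ β : Ω,
      if IsTransition L' α β then
        ∑ γ ∈ Γ α β, (pathUses γ σ η : ℝ) * g α β γ * π' α * L' α β * pathWeight ω γ
      else 0

section Forms

variable {Ω : Type*} {L L' : Ω → Ω → ℝ} {π π' : Ω → ℝ}

lemma mul_sq_sub_nonneg (hL : ∀ x y, x ≠ y → 0 ≤ L x y) (f : Ω → ℝ) (x y : Ω) :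
    0 ≤ L x y * (f x - f y) ^ 2 := by
  rcases eq_or_ne x y with rfl | hxy
  · simp
  · exact mul_nonneg (hL x y hxy) (sq_nonneg _)

lemma dirForm_summand_nonneg (hL : ∀ x y, x ≠ y → 0 ≤ L x y) (hπ : ∀ x, 0 ≤ π x) (f : Ω → ℝ)
    (x y : Ω) : 0 ≤ π x * L x y * (f x - f y) ^ 2 := by
  rw [mul_assoc]
  exact mul_nonneg (hπ x) (mul_sq_sub_nonneg hL f x y)

lemma mul_sq_sub_nonpos_of_not_isTransition (f : Ω → ℝ) {x y : Ω} (h : ¬ IsTransition L x y) :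
    L x y * (f x - f y) ^ 2 ≤ 0 := by
  rcases eq_or_ne x y with rfl | hxy
  · simp
  · exact mul_nonpos_of_nonpos_of_nonneg (not_lt.1 fun hpos => h ⟨hxy, hpos⟩) (sq_nonneg _)

variable [Fintype Ω]

lemma dirForm_nonneg (hL : ∀ x y, x ≠ y → 0 ≤ L x y) (hπ : ∀ x, 0 ≤ π x) (f : Ω → ℝ) :
    0 ≤ DirForm π L f :=
  mul_nonneg (by norm_num)
    (sum_nonneg fun x _ => sum_nonneg fun y _ => dirForm_summand_nonneg hL hπ f x y)

lemma mul_sq_sub_le_two_mul_dirForm (hL : ∀ x y, x ≠ y → 0 ≤ L x y) (hπ : ∀ x, 0 ≤ π x)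
    (f : Ω → ℝ) (x y : Ω) : π x * L x y * (f x - f y) ^ 2 ≤ 2 * DirForm π L f :=
  calc π x * L x y * (f x - f y) ^ 2
      ≤ ∑ y, π x * L x y * (f x - f y) ^ 2 :=
        single_le_sum (fun y _ => dirForm_summand_nonneg hL hπ f x y) (mem_univ y)
    _ ≤ ∑ x, ∑ y, π x * L x y * (f x - f y) ^ 2 :=
        single_le_sum (f := fun x => ∑ y, π x * L x y * (f x - f y) ^ 2)
          (fun x _ => sum_nonneg fun y _ => dirForm_summand_nonneg hL hπ f x y) (mem_univ x)
    _ = 2 * DirForm π L f := by rw [DirForm]; ring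

lemma dirForm_le_mul_dirForm {c : ℝ} (h : ∀ x y, x ≠ y → π x * L x y ≤ c * (π' x * L' x y))
    (f : Ω → ℝ) : DirForm π L f ≤ c * DirForm π' L' f := by
  have hsum : ∑ x, ∑ y, π x * L x y * (f x - f y) ^ 2
      ≤ c * ∑ x, ∑ y, π' x * L' x y * (f x - f y) ^ 2 := by
    simp only [mul_sum]
    refine sum_le_sum fun x _ => sum_le_sum fun y _ => ?_
    rcases eq_or_ne x y with rfl | hxy
    · simp
    · rw [← mul_assoc c]
      exact mul_le_mul_of_nonneg_right (h x y hxy) (sq_nonneg _)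
  unfold DirForm
  linarith

/-- The variance is the Dirichlet form of the chain that resamples its state from `π` at rate one;
the diagonal of its generator does not contribute. -/
lemma varForm_eq_dirForm (π f : Ω → ℝ) : VarForm π f = DirForm π (fun _ y => π y) f := rfl

lemma varForm_le_sq_mul_varForm {b : ℝ} (hπ : ∀ x, 0 ≤ π x) (hb : ∀ x, π x ≤ b * π' x)
    (f : Ω → ℝ) : VarForm π f ≤ b ^ 2 * VarForm π' f := by
  simp only [varForm_eq_dirForm]
  refine dirForm_le_mul_dirForm (fun x y _ => ?_) f
  calc π x * π y ≤ (b * π' x) * (b * π' y) :=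
        mul_le_mul (hb x) (hb y) (hπ y) ((hπ x).trans (hb x))
    _ = b ^ 2 * (π' x * π' y) := by ring

lemma varForm_pos (hπ : ∀ x, 0 < π x) {f : Ω → ℝ} (hf : ∃ x y, f x ≠ f y) : 0 < VarForm π f := by
  obtain ⟨x, y, hxy⟩ := hf
  have hpos : 0 < π x * π y * (f x - f y) ^ 2 :=
    mul_pos (mul_pos (hπ x) (hπ y)) (sq_pos_of_ne_zero (sub_ne_zero.2 hxy))
  have hle : π x * π y * (f x - f y) ^ 2 ≤ 2 * VarForm π f :=
    mul_sq_sub_le_two_mul_dirForm (fun _ y _ => (hπ y).le) (fun x => (hπ x).le) f x y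
  linarith

lemma varForm_eq_zero (π : Ω → ℝ) {f : Ω → ℝ} (hf : ∀ x y, f x = f y) : VarForm π f = 0 := by
  simp [VarForm, sub_eq_zero.2 (hf _ _)]

end Forms

section Poincare

variable {Ω : Type*} [Fintype Ω] {L L' : Ω → Ω → ℝ} {π π' : Ω → ℝ} {C : ℝ}

/-- The Poincaré inequality with constant `C`. Unlike the relaxation time, this notion does not
involve a division by the spectral gap, which may vanish. -/
def PoincareInequality (π : Ω → ℝ) (L : Ω → Ω → ℝ) (C : ℝ) : Prop :=
  ∀ f : Ω → ℝ, VarForm π f ≤ C * DirForm π L f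

namespace PoincareInequality

lemma of_comparison {b ρ : ℝ} (h : PoincareInequality π' L' C) (hC : 0 ≤ C) (hπ : ∀ x, 0 ≤ π x)
    (hb : ∀ x, π x ≤ b * π' x) (hρ : ∀ f, DirForm π' L' f ≤ ρ * DirForm π L f) :
    PoincareInequality π L (b ^ 2 * ρ * C) := fun f =>
  calc VarForm π f ≤ b ^ 2 * VarForm π' f := varForm_le_sq_mul_varForm hπ hb f
    _ ≤ b ^ 2 * (C * DirForm π' L' f) := by gcongr; exact h f
    _ ≤ b ^ 2 * (C * (ρ * DirForm π L f)) := by gcongr; exact hρ f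
    _ = b ^ 2 * ρ * C * DirForm π L f := by ring

variable [Nontrivial Ω]

lemma pos (h : PoincareInequality π L C) (hL : ∀ x y, x ≠ y → 0 ≤ L x y) (hπ : ∀ x, 0 < π x) :
    0 < C := by
  obtain ⟨x, y, hxy⟩ := exists_pair_ne Ω
  have hvar : 0 < VarForm π (Pi.single x 1) := varForm_pos hπ ⟨x, y, by simp [hxy.symm]⟩
  exact pos_of_mul_pos_left (hvar.trans_le (h _)) (dirForm_nonneg hL (fun x => (hπ x).le) _)

lemma inv_le_specGap (h : PoincareInequality π L C) (hL : ∀ x y, x ≠ y → 0 ≤ L x y)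
    (hπ : ∀ x, 0 < π x) : C⁻¹ ≤ specGap π L := by
  obtain ⟨x, y, hxy⟩ := exists_pair_ne Ω
  refine le_csInf ⟨_, Pi.single x 1, ⟨x, y, by simp [hxy.symm]⟩, rfl⟩ ?_
  rintro _ ⟨f, hf, rfl⟩
  rw [le_div_iff₀ (varForm_pos hπ hf), inv_mul_le_iff₀ (h.pos hL hπ)]
  exact h f

end PoincareInequality

lemma specGap_mul_varForm_le (hL : ∀ x y, x ≠ y → 0 ≤ L x y) (hπ : ∀ x, 0 < π x) (f : Ω → ℝ) :
    specGap π L * VarForm π f ≤ DirForm π L f := by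
  have hdir (f : Ω → ℝ) : 0 ≤ DirForm π L f := dirForm_nonneg hL (fun x => (hπ x).le) f
  by_cases hf : ∃ x y, f x ≠ f y
  · rw [← le_div_iff₀ (varForm_pos hπ hf)]
    refine csInf_le ⟨0, ?_⟩ ⟨f, hf, rfl⟩
    rintro _ ⟨f', hf', rfl⟩
    exact div_nonneg (hdir f') (varForm_pos hπ hf').le
  · push Not at hf
    simpa only [varForm_eq_zero π hf, mul_zero] using hdir f

lemma exists_sq_sub_le_mul_dirForm (hL : ∀ x y, x ≠ y → 0 ≤ L x y) (hπ : ∀ x, 0 < π x) {x y : Ω}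
    (hxy : Relation.ReflTransGen (IsTransition L) x y) :
    ∃ K : ℝ, ∀ f : Ω → ℝ, (f x - f y) ^ 2 ≤ K * DirForm π L f := by
  induction hxy with
  | refl => exact ⟨0, fun f => by simp⟩
  | @tail y z _ hyz ih =>
    obtain ⟨K, hK⟩ := ih
    have hrate : 0 < π y * L y z := mul_pos (hπ y) hyz.2
    refine ⟨2 * (K + 2 / (π y * L y z)), fun f => ?_⟩
    have hstep : (f y - f z) ^ 2 ≤ 2 / (π y * L y z) * DirForm π L f := by
      rw [div_mul_eq_mul_div, le_div_iff₀' hrate]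
      exact mul_sq_sub_le_two_mul_dirForm hL (fun x => (hπ x).le) f y z
    calc (f x - f z) ^ 2 = ((f x - f y) + (f y - f z)) ^ 2 := by ring
      _ ≤ 2 * ((f x - f y) ^ 2 + (f y - f z) ^ 2) := add_sq_le
      _ ≤ 2 * (K * DirForm π L f + 2 / (π y * L y z) * DirForm π L f) := by gcongr; exact hK f
      _ = 2 * (K + 2 / (π y * L y z)) * DirForm π L f := by ring

lemma IsErgodicGen.exists_poincareInequality (herg : IsErgodicGen L)
    (hL : ∀ x y, x ≠ y → 0 ≤ L x y) (hπ : ∀ x, 0 < π x) : ∃ C, PoincareInequality π L C := by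
  choose K hK using fun x y => exists_sq_sub_le_mul_dirForm hL hπ (herg x y)
  refine ⟨1 / 2 * ∑ x, ∑ y, π x * π y * K x y, fun f => ?_⟩
  calc VarForm π f
      ≤ 1 / 2 * ∑ x, ∑ y, π x * π y * (K x y * DirForm π L f) := by
        unfold VarForm
        gcongr with x _ y _
        · exact mul_nonneg (hπ x).le (hπ y).le
        · exact hK x y f
    _ = 1 / 2 * (∑ x, ∑ y, π x * π y * K x y) * DirForm π L f := by
        simp only [mul_assoc, sum_mul]

variable [Nontrivial Ω]

lemma relaxTime_eq_inv_specGap (π : Ω → ℝ) (L : Ω → Ω → ℝ) :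
    relaxTime π L = (specGap π L)⁻¹ := by
  rw [relaxTime, if_pos (exists_pair_ne Ω), one_div]

lemma PoincareInequality.relaxTime_le (h : PoincareInequality π L C)
    (hL : ∀ x y, x ≠ y → 0 ≤ L x y) (hπ : ∀ x, 0 < π x) : relaxTime π L ≤ C := by
  rw [relaxTime_eq_inv_specGap]
  exact inv_le_of_inv_le₀ (h.pos hL hπ) (h.inv_le_specGap hL hπ)

lemma IsErgodicGen.poincareInequality_relaxTime (herg : IsErgodicGen L)
    (hL : ∀ x y, x ≠ y → 0 ≤ L x y) (hπ : ∀ x, 0 < π x) :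
    PoincareInequality π L (relaxTime π L) := by
  obtain ⟨C, hC⟩ := herg.exists_poincareInequality hL hπ
  have hgap : 0 < specGap π L := (inv_pos.2 (hC.pos hL hπ)).trans_le (hC.inv_le_specGap hL hπ)
  intro f
  rw [relaxTime_eq_inv_specGap, le_inv_mul_iff₀ hgap]
  exact specGap_mul_varForm_le hL hπ f

end Poincare

section Paths

variable {Ω : Type*}

lemma sum_steps_sub {M : Type*} [AddCommGroup M] (f : Ω → M) {γ : List Ω} {a b : Ω}
    (ha : γ.head? = some a) (hb : γ.getLast? = some b) :
    ((γ.zip γ.tail).map fun p => f p.1 - f p.2).sum = f a - f b := by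
  induction γ generalizing a with
  | nil => simp at ha
  | cons x γ ih =>
    obtain rfl : x = a := by simpa using ha
    cases γ with
    | nil =>
      obtain rfl : x = b := by simpa using hb
      simp
    | cons y γ =>
      have hrest := ih (a := y) rfl (by simpa using hb)
      simp only [List.tail_cons, List.zip_cons_cons, List.map_cons, List.sum_cons] at hrest ⊢
      rw [hrest, sub_add_sub_cancel]

lemma rel_of_mem_zip_tail {R : Ω → Ω → Prop} {γ : List Ω} (hγ : γ.IsChain R) {σ η : Ω}
    (h : (σ, η) ∈ γ.zip γ.tail) : R σ η := by
  obtain ⟨i, hi, hget⟩ := List.mem_iff_getElem.1 h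
  have hlt : i + 1 < γ.length := by
    rw [List.length_zip, List.length_tail] at hi
    lia
  obtain ⟨rfl, rfl⟩ : γ[i] = σ ∧ γ[i + 1] = η := by simpa using hget
  exact List.isChain_iff_getElem.1 hγ i hlt

variable [DecidableEq Ω]

lemma pathUses_eq_zero {L : Ω → Ω → ℝ} {γ : List Ω} (hγ : γ.IsChain (IsTransition L)) {σ η : Ω}
    (h : ¬ IsTransition L σ η) : pathUses γ σ η = 0 :=
  List.count_eq_zero_of_not_mem fun hmem => h (rel_of_mem_zip_tail hγ hmem)

variable [Fintype Ω]

lemma sum_steps_eq_sum_pathUses {R : Type*} [NonAssocSemiring R] (γ : List Ω) (h : Ω → Ω → R) :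
    ((γ.zip γ.tail).map fun p => h p.1 p.2).sum = ∑ σ, ∑ η, (pathUses γ σ η : R) * h σ η := by
  -- `sum_list_map_count` compares pairs via `DecidableEq (Ω × Ω)`, `pathUses` via `instBEqProd`
  have hcount (p : Ω × Ω) :
      @List.count _ instBEqOfDecidableEq p (γ.zip γ.tail) = pathUses γ p.1 p.2 := by
    unfold pathUses
    congr!
  rw [sum_list_map_count, ← Fintype.sum_prod_type']
  simp only [nsmul_eq_mul, ← hcount]
  refine sum_subset (subset_univ _) fun p _ hp => ?_
  rw [hcount, pathUses, List.count_eq_zero_of_not_mem (mt List.mem_toFinset.2 hp), Nat.cast_zero,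
    zero_mul]

/-- Weighted Cauchy–Schwarz for the telescoping sum `f a - f b`, with the steps of `γ` grouped by
the transition used. -/
lemma IsLPath.sq_sub_le_pathWeight_mul {L ω : Ω → Ω → ℝ}
    (hω : ∀ x y, IsTransition L x y → 0 < ω x y) {γ : List Ω} {a b : Ω} (hγ : IsLPath L a b γ)
    (f : Ω → ℝ) :
    (f a - f b) ^ 2 ≤
      pathWeight ω γ * ∑ σ, ∑ η, (pathUses γ σ η : ℝ) * ((f σ - f η) ^ 2 / ω σ η) := by
  obtain ⟨-, ha, hb, hchain⟩ := hγ
  have hused (σ η : Ω) : pathUses γ σ η = 0 ∨ 0 < ω σ η :=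
    (em (IsTransition L σ η)).symm.imp (pathUses_eq_zero hchain) (hω σ η)
  rw [← sum_steps_sub f ha hb, pathWeight, sum_steps_eq_sum_pathUses,
    sum_steps_eq_sum_pathUses γ fun σ η => f σ - f η]
  simp only [← Fintype.sum_prod_type']
  refine sum_sq_le_sum_mul_sum_of_sq_le_mul univ ?_ ?_ ?_ <;> rintro ⟨σ, η⟩ - <;>
    rcases hused σ η with h | h
  · simp [h]
  · positivity
  · simp [h]
  · positivity
  · simp [h]
  · exact le_of_eq (by field_simp)

end Paths

section Flows

variable {Ω : Type*} [Fintype Ω] [DecidableEq Ω] {L L' : Ω → Ω → ℝ} {π π' : Ω → ℝ}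
  {ω : Ω → Ω → ℝ} {Γ : Ω → Ω → Finset (List Ω)} {g : Ω → Ω → List Ω → ℝ} {ρ : ℝ}

/-- The load of the flow on `(σ, η)`: the congestion without its normalization
`1 / (π(σ) 𝓛[σ→η] ω(σ, η))`, which is a junk value when `(σ, η)` is not a transition. -/
noncomputable def flowLoad (L' : Ω → Ω → ℝ) (π' : Ω → ℝ) (ω : Ω → Ω → ℝ)
    (Γ : Ω → Ω → Finset (List Ω)) (g : Ω → Ω → List Ω → ℝ) (σ η : Ω) : ℝ :=
  ∑ α : Ω, ∑ β : Ω,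
    if IsTransition L' α β then
      ∑ γ ∈ Γ α β, (pathUses γ σ η : ℝ) * g α β γ * π' α * L' α β * pathWeight ω γ
    else 0

lemma congestion_eq_flowLoad_div (σ η : Ω) :
    congestion L L' π π' ω Γ g σ η = flowLoad L' π' ω Γ g σ η / (π σ * L σ η * ω σ η) :=
  one_div_mul_eq_div _ _

lemma flowLoad_eq_zero (hΓ : ∀ α β, IsTransition L' α β → ∀ γ ∈ Γ α β, IsLPath L α β γ) {σ η : Ω}
    (h : ¬ IsTransition L σ η) : flowLoad L' π' ω Γ g σ η = 0 := by
  refine sum_eq_zero fun α _ => sum_eq_zero fun β _ => ?_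
  split_ifs with hαβ
  · refine sum_eq_zero fun γ hγ => ?_
    simp [pathUses_eq_zero (hΓ α β hαβ γ hγ).2.2.2 h]
  · rfl

lemma sum_flowLoad_mul (e : Ω → Ω → ℝ) :
    ∑ σ, ∑ η, flowLoad L' π' ω Γ g σ η * e σ η =
      ∑ α, ∑ β, if IsTransition L' α β then
        π' α * L' α β * ∑ γ ∈ Γ α β,
          g α β γ * (pathWeight ω γ * ∑ σ, ∑ η, (pathUses γ σ η : ℝ) * e σ η)
      else 0 := by
  have hload (q : Ω × Ω) : flowLoad L' π' ω Γ g q.1 q.2 * e q.1 q.2 =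
      ∑ p : Ω × Ω, (if IsTransition L' p.1 p.2 then
        ∑ γ ∈ Γ p.1 p.2, (pathUses γ q.1 q.2 : ℝ) * g p.1 p.2 γ * π' p.1 * L' p.1 p.2 *
          pathWeight ω γ
      else 0) * e q.1 q.2 := by
    rw [flowLoad, ← Fintype.sum_prod_type', sum_mul]
  rw [← Fintype.sum_prod_type', ← Fintype.sum_prod_type']
  simp only [hload]
  rw [sum_comm]
  refine sum_congr rfl fun p _ => ?_
  split_ifs
  · simp only [← Fintype.sum_prod_type']
    simp only [mul_sum, sum_mul]
    rw [sum_comm]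
    exact sum_congr rfl fun γ _ => sum_congr rfl fun q _ => by ring
  · simp

lemma sq_sub_le_sum_flow (hω : ∀ x y, IsTransition L x y → 0 < ω x y) {S : Finset (List Ω)}
    {w : List Ω → ℝ} {a b : Ω} (hS : ∀ γ ∈ S, IsLPath L a b γ) (hw : ∀ γ ∈ S, 0 ≤ w γ)
    (hsum : ∑ γ ∈ S, w γ = 1) (f : Ω → ℝ) :
    (f a - f b) ^ 2 ≤ ∑ γ ∈ S, w γ *
      (pathWeight ω γ * ∑ σ, ∑ η, (pathUses γ σ η : ℝ) * ((f σ - f η) ^ 2 / ω σ η)) :=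
  calc (f a - f b) ^ 2 = ∑ γ ∈ S, w γ * (f a - f b) ^ 2 := by rw [← sum_mul, hsum, one_mul]
    _ ≤ _ := sum_le_sum fun γ hγ =>
      mul_le_mul_of_nonneg_left ((hS γ hγ).sq_sub_le_pathWeight_mul hω f) (hw γ hγ)

lemma two_mul_dirForm_le_sum_flowLoad_mul (hπ' : ∀ x, 0 ≤ π' x)
    (hω : ∀ x y, IsTransition L x y → 0 < ω x y)
    (hΓ : ∀ α β, IsTransition L' α β → ∀ γ ∈ Γ α β, IsLPath L α β γ)
    (hg : ∀ α β, IsTransition L' α β → ∀ γ ∈ Γ α β, 0 ≤ g α β γ)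
    (hsum : ∀ α β, IsTransition L' α β → ∑ γ ∈ Γ α β, g α β γ = 1) (f : Ω → ℝ) :
    2 * DirForm π' L' f ≤
      ∑ σ, ∑ η, flowLoad L' π' ω Γ g σ η * ((f σ - f η) ^ 2 / ω σ η) := by
  rw [sum_flowLoad_mul, DirForm, ← mul_assoc, mul_one_div_cancel two_ne_zero, one_mul]
  refine sum_le_sum fun α _ => sum_le_sum fun β _ => ?_
  split_ifs with h
  · exact mul_le_mul_of_nonneg_left
      (sq_sub_le_sum_flow hω (hΓ α β h) (hg α β h) (hsum α β h) f) (mul_nonneg (hπ' α) h.2.le)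
  · rw [mul_assoc]
    exact mul_nonpos_of_nonneg_of_nonpos (hπ' α) (mul_sq_sub_nonpos_of_not_isTransition f h)

lemma flowLoad_mul_le (hL : ∀ x y, x ≠ y → 0 ≤ L x y) (hπ : ∀ x, 0 < π x)
    (hω : ∀ x y, IsTransition L x y → 0 < ω x y)
    (hΓ : ∀ α β, IsTransition L' α β → ∀ γ ∈ Γ α β, IsLPath L α β γ)
    (hρ : ∀ σ η, IsTransition L σ η → congestion L L' π π' ω Γ g σ η ≤ ρ) (f : Ω → ℝ) (σ η : Ω) :
    flowLoad L' π' ω Γ g σ η * ((f σ - f η) ^ 2 / ω σ η) ≤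
      ρ * (π σ * L σ η * (f σ - f η) ^ 2) := by
  by_cases h : IsTransition L σ η
  · have hωpos : 0 < ω σ η := hω σ η h
    have hload : flowLoad L' π' ω Γ g σ η ≤ ρ * (π σ * L σ η * ω σ η) := by
      rw [← div_le_iff₀ (mul_pos (mul_pos (hπ σ) h.2) hωpos), ← congestion_eq_flowLoad_div]
      exact hρ σ η h
    calc flowLoad L' π' ω Γ g σ η * ((f σ - f η) ^ 2 / ω σ η)
        ≤ ρ * (π σ * L σ η * ω σ η) * ((f σ - f η) ^ 2 / ω σ η) := by gcongr
      _ = ρ * (π σ * L σ η * (f σ - f η) ^ 2) := by field_simp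
  · have hzero : L σ η * (f σ - f η) ^ 2 = 0 :=
      (mul_sq_sub_nonpos_of_not_isTransition f h).antisymm (mul_sq_sub_nonneg hL f σ η)
    simp [flowLoad_eq_zero hΓ h, mul_assoc, hzero]

lemma dirForm_le_mul_dirForm_of_congestion_le (hL : ∀ x y, x ≠ y → 0 ≤ L x y)
    (hπ : ∀ x, 0 < π x) (hπ' : ∀ x, 0 ≤ π' x) (hω : ∀ x y, IsTransition L x y → 0 < ω x y)
    (hΓ : ∀ α β, IsTransition L' α β → ∀ γ ∈ Γ α β, IsLPath L α β γ)
    (hg : ∀ α β, IsTransition L' α β → ∀ γ ∈ Γ α β, 0 ≤ g α β γ)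
    (hsum : ∀ α β, IsTransition L' α β → ∑ γ ∈ Γ α β, g α β γ = 1)
    (hρ : ∀ σ η, IsTransition L σ η → congestion L L' π π' ω Γ g σ η ≤ ρ) (f : Ω → ℝ) :
    DirForm π' L' f ≤ ρ * DirForm π L f := by
  have htwo : 2 * DirForm π' L' f ≤ 2 * (ρ * DirForm π L f) :=
    calc 2 * DirForm π' L' f
        ≤ ∑ σ, ∑ η, flowLoad L' π' ω Γ g σ η * ((f σ - f η) ^ 2 / ω σ η) :=
          two_mul_dirForm_le_sum_flowLoad_mul hπ' hω hΓ hg hsum f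
      _ ≤ ∑ σ, ∑ η, ρ * (π σ * L σ η * (f σ - f η) ^ 2) :=
          sum_le_sum fun σ _ => sum_le_sum fun η _ => flowLoad_mul_le hL hπ hω hΓ hρ f σ η
      _ = 2 * (ρ * DirForm π L f) := by
          simp only [← mul_sum, DirForm]
          ring
  exact le_of_mul_le_mul_left htwo two_pos

end Flows

theorem weighted_multicommodity_flows_general
    {Ω : Type*} [Fintype Ω] [DecidableEq Ω] [Nontrivial Ω]
    {L L' : Ω → Ω → ℝ} {π π' : Ω → ℝ} (hgen : IsGenerator L) (hgen' : IsGenerator L')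
    (herg' : IsErgodicGen L') (hπ : ∀ x, 0 < π x) (hπ' : ∀ x, 0 < π' x)
    {ω : Ω → Ω → ℝ} (hω : ∀ x y, IsTransition L x y → 0 < ω x y)
    {Γ : Ω → Ω → Finset (List Ω)} {g : Ω → Ω → List Ω → ℝ}
    (hΓ : ∀ α β, IsTransition L' α β → ∀ γ ∈ Γ α β, IsLPath L α β γ)
    (hg : ∀ α β, IsTransition L' α β → ∀ γ ∈ Γ α β, 0 ≤ g α β γ)
    (hsum : ∀ α β, IsTransition L' α β → ∑ γ ∈ Γ α β, g α β γ = 1)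
    {b : ℝ} (hb : ∀ x, π x / π' x ≤ b)
    {ρ : ℝ} (hρ : ∀ σ η, IsTransition L σ η → congestion L L' π π' ω Γ g σ η ≤ ρ) :
    relaxTime π L ≤ b ^ 2 * ρ * relaxTime π' L' := by
  have hpoincare' : PoincareInequality π' L' (relaxTime π' L') :=
    herg'.poincareInequality_relaxTime hgen'.1 hπ'
  have hpoincare : PoincareInequality π L (b ^ 2 * ρ * relaxTime π' L') :=
    hpoincare'.of_comparison (hpoincare'.pos hgen'.1 hπ').le (fun x => (hπ x).le)
      (fun x => (div_le_iff₀ (hπ' x)).1 (hb x))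
      (dirForm_le_mul_dirForm_of_congestion_le hgen.1 hπ (fun x => (hπ' x).le) hω hΓ hg hsum hρ)
  exact hpoincare.relaxTime_le hgen.1 hπ

/-- weighted multi-commodity flows method:
`τ(𝓛) ≤ b² · ρ_max · τ(𝓛')`. -/
theorem weighted_multicommodity_flows
    {Ω : Type} [Fintype Ω] [DecidableEq Ω] (hcard : 2 ≤ Fintype.card Ω)
    (L L' : Ω → Ω → ℝ) (π π' : Ω → ℝ)
    (hgen : IsGenerator L) (hgen' : IsGenerator L')
    (herg : IsErgodicGen L) (herg' : IsErgodicGen L')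
    (hπpos : ∀ x, 0 < π x) (hπsum : ∑ x : Ω, π x = 1)
    (hπ'pos : ∀ x, 0 < π' x) (hπ'sum : ∑ x : Ω, π' x = 1)
    (hrev : IsReversible L π) (hrev' : IsReversible L' π')
    (ω : Ω → Ω → ℝ) (hω : ∀ x y, IsTransition L x y → 0 < ω x y)
    (Γ : Ω → Ω → Finset (List Ω)) (g : Ω → Ω → List Ω → ℝ)
    (hΓ : ∀ α β, IsTransition L' α β →
      (Γ α β).Nonempty ∧ ∀ γ ∈ Γ α β, IsLPath L α β γ)
    (hflow : ∀ α β, IsTransition L' α β →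
      (∀ γ ∈ Γ α β, 0 ≤ g α β γ ∧ g α β γ ≤ 1) ∧ ∑ γ ∈ Γ α β, g α β γ = 1)
    (b : ℝ) (hb : IsGreatest {r : ℝ | ∃ α : Ω, r = π α / π' α} b)
    (ρmax : ℝ)
    (hρ : IsGreatest
      {r : ℝ | ∃ σ η : Ω, IsTransition L σ η ∧ r = congestion L L' π π' ω Γ g σ η} ρmax) :
    relaxTime π L ≤ b ^ 2 * ρmax * relaxTime π' L' := by
  have : Nontrivial Ω := Fintype.one_lt_card_iff_nontrivial.1 hcard
  exact weighted_multicommodity_flows_general hgen hgen' herg' hπpos hπ'pos hω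
    (fun α β h => (hΓ α β h).2) (fun α β h γ hγ => ((hflow α β h).1 γ hγ).1)
    (fun α β h => (hflow α β h).2) (fun x => hb.2 ⟨x, rfl⟩) (fun σ η h => hρ.2 ⟨σ, η, h, rfl⟩)
end

section
/- In the general block-dynamics setting, the reduced block dynamics R^μ_𝒱 is reversible with respect to π_proj, the projection onto U of the uniform distribution on Ω^μ_V, defined by π_proj(σ̂) = |{σ ∈ Ω^μ_V : σ|_U = σ̂}| / |Ω^μ_V| for σ̂ ∈ Ω_𝓡. -/
/-!
The weighted block dynamics `B^μ_𝒱` is reversible with respect to the uniform distribution: its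
rates `g_i / |Ω^σ_{V_i}|` do not change when `σ` is modified inside `V_i`. The reduced block
dynamics is the projection of `B^μ_𝒱` under `σ ↦ σ|_U`, and the projection of a reversible chain is
reversible as soon as the total rate from a state into any other fibre depends only on the fibre of
that state. This holds here by the spatial Markov property: a neighbour of `V_i` outside `V_i` lies
either outside `V` or in `U`, so `Ω^σ_{V_i}` depends, up to the colours off `V_i`, only on `σ|_U`.
-/

open Finset
open scoped Classical

section Glauber

variable {I : Type*} [Fintype I] {k : ℕ} {S : Type*} [Fintype S] [DecidableEq S]

/-- Off-diagonal entry of the Glauber dynamics: if the two states differ at exactly one site,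
the rate of that site; otherwise `0`. -/
noncomputable def glauberOff (p : I → ℝ) (val : S → I → Fin k) (a b : S) : ℝ :=
  if (Finset.univ.filter fun w => val a w ≠ val b w).card = 1 then
    ∑ w ∈ Finset.univ.filter fun w => val a w ≠ val b w, p w
  else 0

/-- The Glauber dynamics generator with site rates `p`, on a state space `S` of configurations
(described by `val : S → I → Fin k`): off-diagonal entries are the rate of the unique differing
site, diagonal entries make row sums vanish. -/
noncomputable def glauber (p : I → ℝ) (val : S → I → Fin k) : S → S → ℝ :=
  fun σ η =>
    if σ = η then -∑ η' ∈ Finset.univ.filter fun b => b ≠ σ, glauberOff p val σ η'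
    else glauberOff p val σ η

end Glauber

/-- A proper `k`-vertex-colouring of a graph. -/
def ProperCol {V : Type*} (G : SimpleGraph V) {k : ℕ} (σ : V → Fin k) : Prop :=
  ∀ a b : V, G.Adj a b → σ a ≠ σ b

section BlockDynamics

variable {V : Type} [Fintype V] [DecidableEq V]

/-- `Ω^χ_W`: proper `k`-colourings of `G` agreeing with `χ` off `W`. -/
abbrev OmegaW (G : SimpleGraph V) (k : ℕ) (W : Finset V) (χ : V → Fin k) :=
  {σ : V → Fin k // ProperCol G σ ∧ ∀ w ∉ W, σ w = χ w}

variable (G : SimpleGraph V) (k : ℕ) {r : ℕ}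

/-- `g_i`: the minimum over boundary conditions `σ ∈ Ω^μ_V` of the spectral gap of the
Glauber dynamics on the block `V_i`. -/
noncomputable def blockGapW (p : V → ℝ) (Vfull : Finset V) (μ : V → Fin k)
    (Vi : Fin r → Finset V) (i : Fin r) : ℝ :=
  sInf {x : ℝ | ∃ σ : OmegaW G k Vfull μ,
    x = specGap (unif (OmegaW G k (Vi i) σ.1))
          (glauber p (fun τ : OmegaW G k (Vi i) σ.1 => τ.1))}

/-- Off-diagonal entries of the weighted block dynamics `B^μ_𝒱`:
`g_i · π^σ_{V_i}(η)` when `σ` and `η` agree outside the block `V_i`. -/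
noncomputable def blockOff (p : V → ℝ) (Vfull : Finset V) (μ : V → Fin k)
    (Vi : Fin r → Finset V) (σ η : OmegaW G k Vfull μ) : ℝ :=
  ∑ i : Fin r,
    if ∀ w : V, w ∉ Vi i → σ.1 w = η.1 w then
      blockGapW G k p Vfull μ Vi i / (Fintype.card (OmegaW G k (Vi i) σ.1) : ℝ)
    else 0

/-- The weighted block dynamics `B^μ_𝒱`. -/
noncomputable def blockDyn (p : V → ℝ) (Vfull : Finset V) (μ : V → Fin k)
    (Vi : Fin r → Finset V) : OmegaW G k Vfull μ → OmegaW G k Vfull μ → ℝ := fun σ η =>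
  if σ = η then -∑ η' ∈ Finset.univ.filter fun b => b ≠ σ, blockOff G k p Vfull μ Vi σ η'
  else blockOff G k p Vfull μ Vi σ η

/-- `U`: the vertices of `V` having a neighbour (in the induced subgraph on `V`) lying in a
different block. -/
noncomputable def Ublk (Vfull : Finset V) (Vi : Fin r → Finset V) : Finset V :=
  Vfull.filter fun v => ∃ w ∈ Vfull, G.Adj v w ∧ ∃ i j : Fin r, i ≠ j ∧ v ∈ Vi i ∧ w ∈ Vi j

/-- Restriction of a colouring in `Ω^μ_V` to `U`. -/
noncomputable def resW (Vfull : Finset V) (μ : V → Fin k) (Vi : Fin r → Finset V)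
    (σ : OmegaW G k Vfull μ) : {u : V // u ∈ Ublk G Vfull Vi} → Fin k :=
  fun u => σ.1 u.1

/-- `π^{i,σ̂}_proj(η̂)`: the probability, under the uniform distribution on `Ω^σ_{V_i}` for an
arbitrary extension `σ` of `σ̂`, that the restriction to `U` equals `η̂`. -/
noncomputable def projProbW (p : V → ℝ) (Vfull : Finset V) (μ : V → Fin k)
    (Vi : Fin r → Finset V) (i : Fin r)
    (σh : ↥(Set.range (resW G k Vfull μ Vi)))
    (ηh : {u : V // u ∈ Ublk G Vfull Vi} → Fin k) : ℝ :=
  (Fintype.card {ξ : OmegaW G k (Vi i) (Classical.choose (Set.mem_range.mp σh.2)).1 //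
      ∀ u : {u : V // u ∈ Ublk G Vfull Vi}, ξ.1 u.1 = ηh u} : ℝ) /
  (Fintype.card (OmegaW G k (Vi i) (Classical.choose (Set.mem_range.mp σh.2)).1) : ℝ)

/-- Off-diagonal entries of the reduced block dynamics `R^μ_𝒱`. -/
noncomputable def redOffW (p : V → ℝ) (Vfull : Finset V) (μ : V → Fin k)
    (Vi : Fin r → Finset V)
    (σh ηh : ↥(Set.range (resW G k Vfull μ Vi))) : ℝ :=
  ∑ i : Fin r,
    if ∀ u : {u : V // u ∈ Ublk G Vfull Vi}, u.1 ∉ Vi i → σh.1 u = ηh.1 u then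
      blockGapW G k p Vfull μ Vi i * projProbW G k p Vfull μ Vi i σh ηh.1
    else 0

/-- The reduced block dynamics `R^μ_𝒱` on `Ω_𝓡 = {σ|_U : σ ∈ Ω^μ_V}`. -/
noncomputable def redDynW (p : V → ℝ) (Vfull : Finset V) (μ : V → Fin k)
    (Vi : Fin r → Finset V) :
    ↥(Set.range (resW G k Vfull μ Vi)) → ↥(Set.range (resW G k Vfull μ Vi)) → ℝ :=
  fun σh ηh =>
    if σh = ηh then
      -∑ ηh' ∈ Finset.univ.filter fun b => b ≠ σh, redOffW G k p Vfull μ Vi σh ηh'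
    else redOffW G k p Vfull μ Vi σh ηh

/-- The projection `π_proj` onto `U` of the uniform distribution on `Ω^μ_V`. -/
noncomputable def piProjW (Vfull : Finset V) (μ : V → Fin k) (Vi : Fin r → Finset V)
    (σh : ↥(Set.range (resW G k Vfull μ Vi))) : ℝ :=
  (Fintype.card {σ : OmegaW G k Vfull μ // resW G k Vfull μ Vi σ = σh.1} : ℝ) /
  (Fintype.card (OmegaW G k Vfull μ) : ℝ)

end BlockDynamics

theorem IsReversible.lump {Ω S : Type*} [Fintype Ω] {L : Ω → Ω → ℝ} {π : Ω → ℝ} {Q : S → S → ℝ}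
    {ρ : S → ℝ} (hL : IsReversible L π) (f : Ω → S) (hρ : ∀ s, ρ s = ∑ x with f x = s, π x)
    (hQ : ∀ x t, f x ≠ t → Q (f x) t = ∑ y with f y = t, L x y) : IsReversible Q ρ := by
  have flow_eq (s t : S) (hst : s ≠ t) :
      ρ s * Q s t = ∑ x with f x = s, ∑ y with f y = t, π x * L x y := by
    rw [hρ, Finset.sum_mul]
    refine Finset.sum_congr rfl fun x hx => ?_
    obtain rfl : f x = s := (Finset.mem_filter.1 hx).2
    rw [hQ x t hst, Finset.mul_sum]
  intro s t
  obtain rfl | hst := eq_or_ne s t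
  · rfl
  calc ρ s * Q s t
      = ∑ x with f x = s, ∑ y with f y = t, π x * L x y := flow_eq s t hst
    _ = ∑ y with f y = t, ∑ x with f x = s, π x * L x y := Finset.sum_comm
    _ = ∑ y with f y = t, ∑ x with f x = s, π y * L y x := by simp only [hL _ _]
    _ = ρ t * Q t s := (flow_eq t s hst.symm).symm

theorem ProperCol.piecewise {V : Type*} {G : SimpleGraph V} {k : ℕ} {W : Finset V}
    [∀ v, Decidable (v ∈ W)] {f g : V → Fin k} (hf : ProperCol G f) (hg : ProperCol G g)
    (hfg : ∀ a ∈ W, ∀ b ∉ W, G.Adj a b → f b = g b) : ProperCol G (W.piecewise f g) := by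
  have crossing (a b : V) (hab : G.Adj a b) (ha : a ∈ W) (hb : b ∉ W) : f a ≠ g b :=
    hfg a ha b hb hab ▸ hf a b hab
  intro a b hab
  by_cases ha : a ∈ W <;> by_cases hb : b ∈ W <;>
    simp only [ha, hb, not_false_eq_true, Finset.piecewise_eq_of_mem,
      Finset.piecewise_eq_of_notMem]
  · exact hf a b hab
  · exact crossing a b hab ha hb
  · exact (crossing b a hab.symm hb ha).symm
  · exact hg a b hab

section BlockDynamics

variable {V : Type} [DecidableEq V] {G : SimpleGraph V} {k r : ℕ}

namespace OmegaW

variable {W V' : Finset V} {χ χ' μ : V → Fin k}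

/-- The spatial Markov property as a bijection `Ω^χ_W ≃ Ω^χ'_W`, for boundary conditions agreeing
at the outer vertex boundary of `W`: keep the colours on `W` and use `χ'` elsewhere. -/
def congrBoundary (hχ : ProperCol G χ) (hχ' : ProperCol G χ')
    (h : ∀ a ∈ W, ∀ b ∉ W, G.Adj a b → χ b = χ' b) : OmegaW G k W χ ≃ OmegaW G k W χ' where
  toFun ξ := ⟨W.piecewise ξ.1 χ',
    ξ.2.1.piecewise hχ' fun a ha b hb hab => (ξ.2.2 b hb).trans (h a ha b hb hab),
    fun _ hw => W.piecewise_eq_of_notMem _ _ hw⟩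
  invFun ξ := ⟨W.piecewise ξ.1 χ,
    ξ.2.1.piecewise hχ fun a ha b hb hab => (ξ.2.2 b hb).trans (h a ha b hb hab).symm,
    fun _ hw => W.piecewise_eq_of_notMem _ _ hw⟩
  left_inv ξ := by
    ext1; funext v
    by_cases hv : v ∈ W <;> simp [hv, ξ.2.2]
  right_inv ξ := by
    ext1; funext v
    by_cases hv : v ∈ W <;> simp [hv, ξ.2.2]

/-- For `W ⊆ V'` and `σ ∈ Ω^μ_{V'}`, the set `Ω^σ_W` consists of the elements of `Ω^μ_{V'}` that
agree with `σ` off `W`. -/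
def equivOfSubset (hW : W ⊆ V') (σ : OmegaW G k V' μ) :
    OmegaW G k W σ.1 ≃ {η : OmegaW G k V' μ // ∀ w ∉ W, σ.1 w = η.1 w} where
  toFun ξ := ⟨⟨ξ.1, ξ.2.1, fun w hw => (ξ.2.2 w fun h => hw (hW h)).trans (σ.2.2 w hw)⟩,
    fun w hw => (ξ.2.2 w hw).symm⟩
  invFun η := ⟨η.1.1, η.1.2.1, fun w hw => (η.2 w hw).symm⟩

end OmegaW

variable {Vfull : Finset V} {Vi : Fin r → Finset V} {μ : V → Fin k}

theorem mem_Ublk_of_adj (hU : Finset.univ.biUnion Vi = Vfull) {i : Fin r} {a b : V}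
    (hab : G.Adj a b) (ha : a ∈ Vi i) (hb : b ∉ Vi i) (hbV : b ∈ Vfull) :
    b ∈ Ublk G Vfull Vi := by
  have haV : a ∈ Vfull := hU ▸ Finset.mem_biUnion.2 ⟨i, Finset.mem_univ i, ha⟩
  obtain ⟨j, -, hbj⟩ := Finset.mem_biUnion.1 (hU.symm ▸ hbV)
  have hji : j ≠ i := fun h => hb (h ▸ hbj)
  exact Finset.mem_filter.2 ⟨hbV, a, haV, hab.symm, j, i, hji, hbj, ha⟩

theorem eq_of_adj_of_resW_eq (hU : Finset.univ.biUnion Vi = Vfull) {σ τ : OmegaW G k Vfull μ}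
    (h : resW G k Vfull μ Vi σ = resW G k Vfull μ Vi τ) (i : Fin r) :
    ∀ a ∈ Vi i, ∀ b ∉ Vi i, G.Adj a b → σ.1 b = τ.1 b := by
  intro a ha b hb hab
  by_cases hbV : b ∈ Vfull
  · exact congrFun h ⟨b, mem_Ublk_of_adj hU hab ha hb hbV⟩
  · rw [σ.2.2 b hbV, τ.2.2 b hbV]

variable [Fintype V]

theorem blockOff_comm (p : V → ℝ) (σ η : OmegaW G k Vfull μ) :
    blockOff G k p Vfull μ Vi σ η = blockOff G k p Vfull μ Vi η σ := by
  refine Finset.sum_congr rfl fun i _ => ?_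
  by_cases h : ∀ w ∉ Vi i, σ.1 w = η.1 w
  · rw [if_pos h, if_pos fun w hw => (h w hw).symm,
      Fintype.card_congr (OmegaW.congrBoundary σ.2.1 η.2.1 fun _ _ b hb _ => h b hb)]
  · rw [if_neg h, if_neg fun h' => h fun w hw => (h' w hw).symm]

theorem isReversible_blockDyn (p : V → ℝ) :
    IsReversible (blockDyn G k p Vfull μ Vi) (unif (OmegaW G k Vfull μ)) := by
  intro σ η
  obtain rfl | hση := eq_or_ne σ η
  · rfl
  · simp only [blockDyn, if_neg hση, if_neg hση.symm, blockOff_comm p σ η, unif]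

theorem projProbW_eq_zero (p : V → ℝ) (i : Fin r)
    (x : Set.range (resW G k Vfull μ Vi)) (t : Ublk G Vfull Vi → Fin k)
    (hxt : ¬ ∀ u : Ublk G Vfull Vi, u.1 ∉ Vi i → x.1 u = t u) :
    projProbW G k p Vfull μ Vi i x t = 0 := by
  have hσ := Classical.choose_spec (Set.mem_range.mp x.2)
  rw [projProbW, Fintype.card_eq_zero_iff.2, Nat.cast_zero, zero_div]
  exact ⟨fun ⟨ξ, hξ⟩ =>
    hxt fun u hu => (congrFun hσ u).symm.trans ((ξ.2.2 u hu).symm.trans (hξ u))⟩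

theorem projProbW_eq_card_div_card (hU : Finset.univ.biUnion Vi = Vfull) (p : V → ℝ)
    (i : Fin r) (x : Set.range (resW G k Vfull μ Vi)) (t : Ublk G Vfull Vi → Fin k)
    {σ : OmegaW G k Vfull μ} (hσ : resW G k Vfull μ Vi σ = x.1) :
    projProbW G k p Vfull μ Vi i x t =
      (Fintype.card {ξ : OmegaW G k (Vi i) σ.1 // ∀ u : Ublk G Vfull Vi, ξ.1 u = t u} : ℝ) /
        Fintype.card (OmegaW G k (Vi i) σ.1) := by
  unfold projProbW
  have hτ := Classical.choose_spec (Set.mem_range.mp x.2)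
  set τ := Classical.choose (Set.mem_range.mp x.2)
  have hτσ : resW G k Vfull μ Vi τ = resW G k Vfull μ Vi σ := hτ.trans hσ.symm
  let e : OmegaW G k (Vi i) τ.1 ≃ OmegaW G k (Vi i) σ.1 :=
    OmegaW.congrBoundary τ.2.1 σ.2.1 (eq_of_adj_of_resW_eq hU hτσ i)
  have e_apply (ξ : OmegaW G k (Vi i) τ.1) (u : Ublk G Vfull Vi) : (e ξ).1 u = ξ.1 u := by
    by_cases hu : u.1 ∈ Vi i
    · exact Finset.piecewise_eq_of_mem _ _ _ hu
    · rw [(e ξ).2.2 u hu, ξ.2.2 u hu]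
      exact (congrFun hτσ u).symm
  let eFibre : {ξ : OmegaW G k (Vi i) τ.1 // ∀ u : Ublk G Vfull Vi, ξ.1 u = t u} ≃
      {ξ : OmegaW G k (Vi i) σ.1 // ∀ u : Ublk G Vfull Vi, ξ.1 u = t u} :=
    e.subtypeEquiv fun ξ => by simp only [e_apply]
  rw [Fintype.card_congr e, Fintype.card_congr eFibre]

theorem projProbW_eq_card_filter (hU : Finset.univ.biUnion Vi = Vfull) (p : V → ℝ) (i : Fin r)
    (x : Set.range (resW G k Vfull μ Vi)) (t : Ublk G Vfull Vi → Fin k)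
    {σ : OmegaW G k Vfull μ} (hσ : resW G k Vfull μ Vi σ = x.1) :
    projProbW G k p Vfull μ Vi i x t =
      (#{η : OmegaW G k Vfull μ | resW G k Vfull μ Vi η = t ∧ ∀ w ∉ Vi i, σ.1 w = η.1 w} : ℝ) /
        Fintype.card (OmegaW G k (Vi i) σ.1) := by
  have hVi : Vi i ⊆ Vfull := hU ▸ Finset.subset_biUnion_of_mem Vi (Finset.mem_univ i)
  let e : {ξ : OmegaW G k (Vi i) σ.1 // ∀ u : Ublk G Vfull Vi, ξ.1 u = t u} ≃
      {η : OmegaW G k Vfull μ // (∀ w ∉ Vi i, σ.1 w = η.1 w) ∧ resW G k Vfull μ Vi η = t} :=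
    ((OmegaW.equivOfSubset hVi σ).subtypeEquiv fun ξ => funext_iff.symm).trans
      (Equiv.subtypeSubtypeEquivSubtypeInter _ fun η => resW G k Vfull μ Vi η = t)
  rw [projProbW_eq_card_div_card hU p i x t hσ, Fintype.card_congr e, Fintype.card_subtype]
  simp only [and_comm]

theorem redOffW_eq_sum_blockOff (hU : Finset.univ.biUnion Vi = Vfull) (p : V → ℝ)
    (x y : Set.range (resW G k Vfull μ Vi)) {σ : OmegaW G k Vfull μ}
    (hσ : resW G k Vfull μ Vi σ = x.1) :
    redOffW G k p Vfull μ Vi x y =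
      ∑ η with resW G k Vfull μ Vi η = y.1, blockOff G k p Vfull μ Vi σ η := by
  calc redOffW G k p Vfull μ Vi x y
      = ∑ i, blockGapW G k p Vfull μ Vi i * projProbW G k p Vfull μ Vi i x y.1 := by
        refine Finset.sum_congr rfl fun i _ => ite_eq_left_iff.2 fun h => ?_
        rw [projProbW_eq_zero p i x y.1 h, mul_zero]
    _ = ∑ i, ∑ η with resW G k Vfull μ Vi η = y.1,
          if ∀ w ∉ Vi i, σ.1 w = η.1 w then
            blockGapW G k p Vfull μ Vi i / (Fintype.card (OmegaW G k (Vi i) σ.1) : ℝ)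
          else 0 := by
        refine Finset.sum_congr rfl fun i _ => ?_
        rw [projProbW_eq_card_filter hU p i x y.1 hσ, ← Finset.sum_filter, Finset.filter_filter,
          Finset.sum_const, nsmul_eq_mul, mul_div_left_comm]
    _ = ∑ η with resW G k Vfull μ Vi η = y.1, blockOff G k p Vfull μ Vi σ η := Finset.sum_comm

theorem redDynW_eq_sum_blockDyn (hU : Finset.univ.biUnion Vi = Vfull) (p : V → ℝ)
    {x y : Set.range (resW G k Vfull μ Vi)} (hxy : x ≠ y) {σ : OmegaW G k Vfull μ}
    (hσ : resW G k Vfull μ Vi σ = x.1) :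
    redDynW G k p Vfull μ Vi x y =
      ∑ η with resW G k Vfull μ Vi η = y.1, blockDyn G k p Vfull μ Vi σ η := by
  rw [redDynW, if_neg hxy, redOffW_eq_sum_blockOff hU p x y hσ]
  refine Finset.sum_congr rfl fun η hη => (if_neg ?_).symm
  rintro rfl
  exact hxy (Subtype.ext (hσ.symm.trans (Finset.mem_filter.1 hη).2))

theorem piProjW_eq_sum_unif (x : Set.range (resW G k Vfull μ Vi)) :
    piProjW G k Vfull μ Vi x =
      ∑ σ with resW G k Vfull μ Vi σ = x.1, unif (OmegaW G k Vfull μ) σ := by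
  simp only [piProjW, unif, Finset.sum_const, nsmul_eq_mul, mul_one_div, Fintype.card_subtype]

end BlockDynamics

theorem reduced_block_dynamics_reversible_general
    {V : Type} [Fintype V] [DecidableEq V] (G : SimpleGraph V) (k : ℕ) (p : V → ℝ)
    (Vfull : Finset V) {r : ℕ} (Vi : Fin r → Finset V)
    (hcover : Finset.univ.biUnion Vi = Vfull) (μ : V → Fin k) :
    IsReversible (redDynW G k p Vfull μ Vi) (piProjW G k Vfull μ Vi) := by
  refine (isReversible_blockDyn (Vi := Vi) p).lump (Set.rangeFactorization (resW G k Vfull μ Vi))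
    (fun x => ?_) fun σ y hσy => ?_
  · simpa only [Subtype.ext_iff, Set.rangeFactorization_coe] using piProjW_eq_sum_unif x
  · simpa only [Subtype.ext_iff, Set.rangeFactorization_coe] using
      redDynW_eq_sum_blockDyn hcover p hσy (σ := σ) rfl

/-- the reduced block dynamics `R^μ_𝒱` is reversible with respect to the
projection onto `U` of the uniform distribution on `Ω^μ_V`. -/
theorem reduced_block_dynamics_reversible
    {V : Type} [Fintype V] [DecidableEq V] (G : SimpleGraph V) [DecidableRel G.Adj]
    (k : ℕ) (p : V → ℝ) (hp : ∀ w, 0 < p w)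
    (Vfull : Finset V) {r : ℕ} (Vi : Fin r → Finset V)
    (hpart_disj : ∀ i j : Fin r, i ≠ j → Disjoint (Vi i) (Vi j))
    (hpart_union : Finset.univ.biUnion Vi = Vfull)
    (hpart_ne : ∀ i, (Vi i).Nonempty)
    (μ : V → Fin k) (hμ : ProperCol G μ)
    (hblocks_erg : ∀ (i : Fin r) (σ : OmegaW G k Vfull μ),
      IsErgodicGen (glauber p (fun τ : OmegaW G k (Vi i) σ.1 => τ.1))) :
    IsReversible (redDynW G k p Vfull μ Vi) (piProjW G k Vfull μ Vi) :=
  reduced_block_dynamics_reversible_general G k p Vfull Vi hpart_union μ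
end
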